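/- If M is a Hurwitz real n×n matrix, then the matrix exponential exp(t·M) tends to the zero matrix as t → ∞; consequently, for every initial condition x₀ ∈ ℝⁿ the solution t ↦ exp(t·M)·x₀ of the linear system x' = M x tends to 0 as t → ∞. -/

import Mathlib

open Matrix Filter Topology

/-- A real square matrix is Hurwitz if every complex eigenvalue has strictly
negative real part. -/
def IsHurwitz {n : ℕ} (M : Matrix (Fin n) (Fin n) ℝ) : Prop :=
  ∀ μ ∈ spectrum ℂ (M.map (Complex.ofReal)), μ.re < 0

section helpers

open scoped Nat

attribute [local instance] Matrix.linftyOpNormedRing Matrix.linftyOpNormedAlgebra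

/-- The exponential series applied to a vector killed by a power of `N` is a finite sum. -/
lemma exp_mulVec_of_nilp {n : ℕ} (N : Matrix (Fin n) (Fin n) ℂ) (v : Fin n → ℂ) (k : ℕ)
    (h : (N ^ k).mulVec v = 0) (t : ℂ) :
    (NormedSpace.exp (t • N)).mulVec v =
      ∑ j ∈ Finset.range k, ((j ! : ℂ)⁻¹ * t ^ j) • (N ^ j).mulVec v := by
  have h1 := NormedSpace.exp_series_hasSum_exp' (𝕂 := ℂ) (t • N)
  let L : Matrix (Fin n) (Fin n) ℂ →+ (Fin n → ℂ) :=
    { toFun := fun X => X.mulVec v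
      map_zero' := Matrix.zero_mulVec v
      map_add' := fun X Y => Matrix.add_mulVec X Y v }
  have hL : Continuous L := Continuous.matrix_mulVec continuous_id continuous_const
  have h2 := h1.map L hL
  have h3 : ∀ j, (L ∘ fun m : ℕ => (m ! : ℂ)⁻¹ • (t • N) ^ m) j
      = ((j ! : ℂ)⁻¹ * t ^ j) • (N ^ j).mulVec v := by
    intro j
    simp only [Function.comp, L, AddMonoidHom.coe_mk, ZeroHom.coe_mk, smul_pow, smul_smul,
      Matrix.smul_mulVec]
  have h4 := h2
  rw [show (L ∘ fun m : ℕ => (m ! : ℂ)⁻¹ • (t • N) ^ m) =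
    fun j : ℕ => ((j ! : ℂ)⁻¹ * t ^ j) • (N ^ j).mulVec v from funext h3] at h4
  refine h4.unique (hasSum_sum_of_ne_finset_zero ?_)
  intro j hj
  have hkj : k ≤ j := by simpa using hj
  obtain ⟨m, rfl⟩ := Nat.exists_eq_add_of_le' hkj
  rw [pow_add N, ← Matrix.mulVec_mulVec, h, Matrix.mulVec_zero, smul_zero]

lemma exp_shift {n : ℕ} (A : Matrix (Fin n) (Fin n) ℂ) (μ t : ℂ) :
    NormedSpace.exp (t • A) =
      Complex.exp (t * μ) • NormedSpace.exp (t • (A - μ • (1 : Matrix (Fin n) (Fin n) ℂ))) := by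
  have e : t • A = algebraMap ℂ (Matrix (Fin n) (Fin n) ℂ) (t * μ)
      + t • (A - μ • (1 : Matrix (Fin n) (Fin n) ℂ)) := by
    rw [Algebra.algebraMap_eq_smul_one, smul_sub, smul_smul]; abel
  have h1 : NormedSpace.exp (algebraMap ℂ (Matrix (Fin n) (Fin n) ℂ) (t * μ)) =
      algebraMap ℂ (Matrix (Fin n) (Fin n) ℂ) (NormedSpace.exp (t * μ)) :=
    (NormedSpace.algebraMap_exp_comm (𝔸 := Matrix (Fin n) (Fin n) ℂ) (t * μ)).symm
  rw [e, Matrix.exp_add_of_commute _ _ (Algebra.commute_algebraMap_left _ _), h1,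
    ← Complex.exp_eq_exp_ℂ, Algebra.algebraMap_eq_smul_one, smul_mul_assoc, one_mul]

lemma tendsto_scalar (μ : ℂ) (hμ : μ.re < 0) (j : ℕ) :
    Tendsto (fun t : ℝ => Complex.exp ((t : ℂ) * μ) * (t : ℂ) ^ j) atTop (𝓝 0) := by
  rw [tendsto_zero_iff_norm_tendsto_zero]
  have h := tendsto_rpow_mul_exp_neg_mul_atTop_nhds_zero (j : ℝ) (-μ.re) (by linarith)
  refine h.congr' ?_
  filter_upwards [eventually_ge_atTop 0] with t ht
  rw [norm_mul, norm_pow, Complex.norm_exp, Complex.norm_real, Real.norm_of_nonneg ht,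
    Real.rpow_natCast, mul_comm, Complex.re_ofReal_mul]
  congr 2
  ring

lemma tendsto_of_nilp {n : ℕ} (A : Matrix (Fin n) (Fin n) ℂ) (μ : ℂ) (hμ : μ.re < 0)
    (v : Fin n → ℂ) (k : ℕ)
    (h : ((A - μ • (1 : Matrix (Fin n) (Fin n) ℂ)) ^ k).mulVec v = 0) :
    Tendsto (fun t : ℝ => (NormedSpace.exp ((t : ℂ) • A)).mulVec v) atTop (𝓝 0) := by
  have e : ∀ t : ℝ, (NormedSpace.exp ((t : ℂ) • A)).mulVec v =
      ∑ j ∈ Finset.range k, (Complex.exp ((t : ℂ) * μ) * (t : ℂ) ^ j) •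
        ((j ! : ℂ)⁻¹ • ((A - μ • (1 : Matrix (Fin n) (Fin n) ℂ)) ^ j).mulVec v) := by
    intro t
    rw [exp_shift A μ, Matrix.smul_mulVec, exp_mulVec_of_nilp _ v k h, Finset.smul_sum]
    refine Finset.sum_congr rfl fun j _ => ?_
    rw [smul_smul, smul_smul]
    congr 1
    ring
  simp only [e]
  rw [← Finset.sum_const_zero (s := Finset.range k)]
  refine tendsto_finsetSum _ fun j _ => ?_
  simpa using (tendsto_scalar μ hμ j).smul_const
    ((j ! : ℂ)⁻¹ • ((A - μ • (1 : Matrix (Fin n) (Fin n) ℂ)) ^ j).mulVec v)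

lemma tendsto_complex {n : ℕ} (A : Matrix (Fin n) (Fin n) ℂ)
    (hA : ∀ μ ∈ spectrum ℂ A, μ.re < 0) (v : Fin n → ℂ) :
    Tendsto (fun t : ℝ => (NormedSpace.exp ((t : ℂ) • A)).mulVec v) atTop (𝓝 0) := by
  let W : Submodule ℂ (Fin n → ℂ) :=
    { carrier := {v | Tendsto (fun t : ℝ => (NormedSpace.exp ((t : ℂ) • A)).mulVec v) atTop (𝓝 0)}
      zero_mem' := by simp
      add_mem' := by
        intro a b ha hb
        simpa [Matrix.mulVec_add] using Tendsto.add ha hb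
      smul_mem' := by
        intro c a ha
        simpa [Matrix.mulVec_smul] using Tendsto.const_smul ha c }
  suffices hW : W = ⊤ by
    have : v ∈ W := hW ▸ Submodule.mem_top
    exact this
  rw [eq_top_iff, ← Module.End.iSup_maxGenEigenspace_eq_top (Matrix.toLin' A)]
  refine iSup_le fun μ w hw => ?_
  obtain ⟨k, hk⟩ := (Module.End.mem_maxGenEigenspace _ _ _).1 hw
  by_cases hμ : μ ∈ spectrum ℂ A
  · refine tendsto_of_nilp A μ (hA μ hμ) w k ?_
    have e : Matrix.toLin' A - μ • (1 : Module.End ℂ (Fin n → ℂ))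
        = Matrix.toLin' (A - μ • (1 : Matrix (Fin n) (Fin n) ℂ)) := by
      simp [map_sub, Matrix.toLin'_one, Module.End.one_eq_id]
    rw [e, ← Matrix.toLin'_pow, Matrix.toLin'_apply] at hk
    exact hk
  · have hu : IsUnit (A - μ • (1 : Matrix (Fin n) (Fin n) ℂ)) := by
      rw [spectrum.notMem_iff, Algebra.algebraMap_eq_smul_one] at hμ
      rw [← neg_sub]
      exact hμ.neg
    have e : Matrix.toLin' A - μ • (1 : Module.End ℂ (Fin n → ℂ))
        = Matrix.toLin' (A - μ • (1 : Matrix (Fin n) (Fin n) ℂ)) := by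
      simp [map_sub, Matrix.toLin'_one, Module.End.one_eq_id]
    rw [e, ← Matrix.toLin'_pow, Matrix.toLin'_apply] at hk
    have hw0 : w = 0 := by
      apply Matrix.mulVec_injective_of_isUnit (hu.pow k)
      simpa using hk
    rw [hw0]
    exact W.zero_mem

lemma exp_map_ofReal {n : ℕ} (M : Matrix (Fin n) (Fin n) ℝ) (t : ℝ) :
    (NormedSpace.exp (t • M)).map Complex.ofReal
      = NormedSpace.exp ((t : ℂ) • M.map Complex.ofReal) := by
  have h := NormedSpace.map_exp (Complex.ofRealHom.mapMatrix (m := Fin n))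
    (Continuous.matrix_map continuous_id Complex.continuous_ofReal) (t • M)
  have e : Complex.ofRealHom.mapMatrix (t • M) = (t : ℂ) • M.map Complex.ofReal := by
    ext i j; simp
  rw [e] at h
  exact h

end helpers

/-- If `M` is Hurwitz then `exp (t • M) → 0` as `t → ∞`, and consequently every
solution `t ↦ exp (t • M) x₀` of `x' = M x` tends to `0`. -/
theorem hurwitz_exp_tendsto_zero {n : ℕ} (hn : 0 < n)
    (M : Matrix (Fin n) (Fin n) ℝ) (hM : IsHurwitz M) :
    Tendsto (fun t : ℝ => NormedSpace.exp (t • M)) atTop (𝓝 0) ∧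
    ∀ x₀ : Fin n → ℝ,
      Tendsto (fun t : ℝ => (NormedSpace.exp (t • M)).mulVec x₀) atTop (𝓝 0) := by
  have key : Tendsto (fun t : ℝ => NormedSpace.exp (t • M)) atTop (𝓝 0) := by
    refine tendsto_pi_nhds.2 fun i => tendsto_pi_nhds.2 fun j => ?_
    have h := tendsto_pi_nhds.1 (tendsto_complex _ hM (Pi.single j 1)) i
    have h2 := (Complex.continuous_re.tendsto _).comp h
    simp only [← exp_map_ofReal, Matrix.mulVec_single_one] at h2
    simpa [Function.comp_def] using h2
  refine ⟨key, fun x₀ => ?_⟩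
  have hc : Continuous fun X : Matrix (Fin n) (Fin n) ℝ => X.mulVec x₀ :=
    Continuous.matrix_mulVec continuous_id continuous_const
  simpa [Function.comp_def] using (hc.tendsto 0).comp key
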